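/- arXiv:1009.2022 — 2 statements merged into one kernel-verified Lean document; each statement's English description precedes it below -/
import Mathlib

section
/- For each integer ν ≥ 2, let Ω_il = √(ν(ν−1)), let Ω*_ν be the unique positive solution of Ω²/(ν(ν−1)) = (1 − γ(ν+1, Ω))/γ(ν−1, Ω), and define R̄_ν = (ν/Ω_il − 1) + (ν/Ω_il + 1) Ω_il^{ν−1} e^{−Ω_il}/(ν−1)! and R*_ν = Ω*_ν γ(ν−1, Ω*_ν)/(ν−1) − ν γ(ν+1, Ω*_ν)/Ω*_ν + ν/Ω*_ν − 1. Then lim_{ν→∞} R̄_ν / R*_ν = 1. -/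
/-!
Let `X` be gamma distributed of shape `ν`. The asymptotic risk of `Ω` is
`E[max (Ω / X) (X / Ω)] - 1`, and `R̄` is its value at `Ω₀ = √(ν (ν - 1))`
(`splitRisk_centre_self`). Replacing the maximum by `Ω / X` on `X < T` and by `X / Ω` on `X > T`
can only decrease it (`splitRisk_le`). This gives both comparisons between `R̄` and `R*`:

* Splitting at `T = Ω*` and using the stationarity equation gives `R* ≤ R̄`.
* Splitting at `T = Ω₀` gives, for every `Ω`, a lower bound `c (a x + b / x) - 1` with
  `x = Ω / Ω₀`, whereas `R̄ = c (a + b) - 1`. Minimizing over `x`, the loss is at most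
  `c (√a - √b) ^ 2 ≤ c (a - b) ^ 2`.

Here `a - b` is `2 P(X < Ω₀) - 1` up to a multiple of the density at `Ω₀`. Two reflection arguments
place the median of `X` in `[ν - 1, ν]`, an interval which also contains `Ω₀`, so `a - b` is at
most three times the density `d` at the mode. Hence `R̄ - O(d ^ 2) ≤ R* ≤ R̄`, while `R̄` is bounded
below by a multiple of `d`; as `d` tends to zero by Stirling's formula, the ratio tends to one.
-/

open Real Filter Set

/-- Normalized lower incomplete gamma function. -/
noncomputable def lowerGamma (t u : ℝ) : ℝ :=
  (∫ s in (0:ℝ)..u, s ^ (t - 1) * Real.exp (-s)) / Real.Gamma t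

/-! ### The incomplete gamma function of integer shape -/

/-- The unnormalized lower incomplete gamma function `∫₀ᵘ sᵏ e⁻ˢ ds` of integer shape `k + 1`,
written with a natural-number power. -/
noncomputable def incGamma (k : ℕ) (u : ℝ) : ℝ := ∫ s in (0:ℝ)..u, s ^ k * exp (-s)

lemma lowerGamma_natCast_add_one (k : ℕ) (u : ℝ) :
    lowerGamma ((k : ℝ) + 1) u = incGamma k u / k.factorial := by
  simp [lowerGamma, incGamma, Real.Gamma_nat_eq_factorial]

lemma continuous_integrand (k : ℕ) : Continuous fun s : ℝ => s ^ k * exp (-s) := by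
  fun_prop

lemma hasDerivAt_incGamma (k : ℕ) (u : ℝ) :
    HasDerivAt (incGamma k) (u ^ k * exp (-u)) u :=
  intervalIntegral.integral_hasDerivAt_right
    ((continuous_integrand k).intervalIntegrable _ _)
    (continuous_integrand k).stronglyMeasurable.stronglyMeasurableAtFilter
    (continuous_integrand k).continuousAt

lemma incGamma_zero (k : ℕ) : incGamma k 0 = 0 := by simp [incGamma]

lemma incGamma_mono (k : ℕ) : MonotoneOn (incGamma k) (Ici 0) := by
  apply monotoneOn_of_deriv_nonneg (convex_Ici 0)
    (fun x _ => (hasDerivAt_incGamma k x).continuousAt.continuousWithinAt)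
    (fun x _ => (hasDerivAt_incGamma k x).differentiableAt.differentiableWithinAt)
  intro x hx
  rw [interior_Ici] at hx
  have hx : 0 < x := hx
  rw [(hasDerivAt_incGamma k x).deriv]
  positivity

lemma incGamma_nonneg (k : ℕ) {u : ℝ} (hu : 0 ≤ u) : 0 ≤ incGamma k u := by
  rw [← incGamma_zero k]
  exact incGamma_mono k (mem_Ici.2 le_rfl) hu hu

lemma incGamma_pos (k : ℕ) {u : ℝ} (hu : 0 < u) : 0 < incGamma k u := by
  apply intervalIntegral.intervalIntegral_pos_of_pos_on
    ((continuous_integrand k).intervalIntegrable _ _) _ hu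
  intro x hx
  have := hx.1
  positivity

lemma tendsto_incGamma (k : ℕ) : Tendsto (incGamma k) atTop (nhds (k.factorial : ℝ)) := by
  have hpos : (0 : ℝ) < (k : ℝ) + 1 := by positivity
  have hint := Real.GammaIntegral_convergent hpos
  have h := MeasureTheory.intervalIntegral_tendsto_integral_Ioi 0 hint tendsto_id
  rw [← Real.Gamma_eq_integral hpos, Real.Gamma_nat_eq_factorial] at h
  refine h.congr fun u => ?_
  simp [incGamma, mul_comm]

lemma incGamma_le_factorial (k : ℕ) {u : ℝ} (hu : 0 ≤ u) : incGamma k u ≤ k.factorial := by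
  apply ge_of_tendsto (tendsto_incGamma k)
  filter_upwards [eventually_ge_atTop u] with v hv
  exact incGamma_mono k hu (hu.trans hv) hv

/-- Integration by parts in the shape parameter. -/
lemma incGamma_succ (k : ℕ) (u : ℝ) :
    incGamma (k + 1) u = (k + 1) * incGamma k u - u ^ (k + 1) * exp (-u) := by
  have hd : ∀ x, HasDerivAt (fun u => (k + 1) * incGamma k u - u ^ (k + 1) * exp (-u))
      (x ^ (k + 1) * exp (-x)) x := by
    intro x
    have h1 := (hasDerivAt_incGamma k x).const_mul ((k : ℝ) + 1)
    have h2 := (hasDerivAt_pow (k + 1) x).mul (hasDerivAt_neg x).exp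
    refine (h1.sub h2).congr_deriv ?_
    rw [Nat.add_sub_cancel]
    push_cast
    ring
  have h := intervalIntegral.integral_eq_sub_of_hasDerivAt (a := 0) (b := u) (fun x _ => hd x)
    ((continuous_integrand (k + 1)).intervalIntegrable _ _)
  simpa [incGamma] using h

/-! ### Bounds on the density and the median -/

/-- The integrand `sᵏ e⁻ˢ` is largest at `s = k`. -/
lemma integrand_le_mode {k : ℕ} (hk : 0 < k) {s : ℝ} (hs : 0 ≤ s) :
    s ^ k * exp (-s) ≤ (k : ℝ) ^ k * exp (-k) := by
  have hk' : (0 : ℝ) < k := by exact_mod_cast hk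
  have h1 : s ≤ k * exp (s / k - 1) := by
    have := add_one_le_exp (s / k - 1)
    calc s = k * (s / k - 1 + 1) := by field_simp; ring
      _ ≤ _ := by gcongr
  calc s ^ k * exp (-s) ≤ (k * exp (s / k - 1)) ^ k * exp (-s) := by gcongr
    _ = (k : ℝ) ^ k * exp (-k) := by
      rw [mul_pow, ← exp_nat_mul, mul_assoc, ← exp_add]
      congr 2
      field_simp
      ring

lemma incGamma_sub_le {k : ℕ} (hk : 0 < k) {a b : ℝ} (ha : 0 ≤ a) (hab : a ≤ b) (hb : b ≤ a + 1) :
    incGamma k b - incGamma k a ≤ (k : ℝ) ^ k * exp (-k) := by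
  have h1 : incGamma k b - incGamma k a = ∫ s in a..b, s ^ k * exp (-s) :=
    intervalIntegral.integral_interval_sub_left
      ((continuous_integrand k).intervalIntegrable _ _)
      ((continuous_integrand k).intervalIntegrable _ _)
  rw [h1]
  calc (∫ s in a..b, s ^ k * exp (-s)) ≤ ∫ s in a..b, (k : ℝ) ^ k * exp (-k) := by
        apply intervalIntegral.integral_mono_on hab
          ((continuous_integrand k).intervalIntegrable _ _) (by simp)
        intro s hs
        exact integrand_le_mode hk (ha.trans hs.1)
    _ = (b - a) * ((k : ℝ) ^ k * exp (-k)) := by simp; ring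
    _ ≤ 1 * ((k : ℝ) ^ k * exp (-k)) := by gcongr; linarith
    _ = _ := one_mul _

/-- The gamma density of shape `k + 1` is skewed to the right about its mode `k`: at distance `x`
it is larger on the right. In logarithmic form this is `2 t ≤ log ((1 + t) / (1 - t))`. -/
lemma reflect_mode {k : ℕ} {x : ℝ} (hx : 0 ≤ x) (hxk : x < k) :
    (k - x) ^ k * exp (-(k - x)) ≤ (k + x) ^ k * exp (-(k + x)) := by
  have hk : (0 : ℝ) < k := hx.trans_lt hxk
  have h0 : 0 < k - x := sub_pos.2 hxk
  have h := le_log_one_add_of_nonneg (x := 2 * x / (k - x)) (by positivity)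
  have e1 : 1 + 2 * x / (k - x) = (k + x) / (k - x) := by field_simp; ring
  have e2 : 2 * (2 * x / (k - x)) / (2 * x / (k - x) + 2) = 2 * x / k := by
    field_simp; ring
  rw [e1, e2, log_div (by positivity) h0.ne'] at h
  have h' : 2 * x ≤ k * (log (k + x) - log (k - x)) := by
    rw [div_le_iff₀ hk] at h; linarith
  rw [← exp_log h0, ← exp_log (show 0 < k + x by positivity), ← exp_nat_mul, ← exp_nat_mul,
    ← exp_add, ← exp_add, exp_le_exp, exp_log h0, exp_log (show 0 < k + x by positivity)]
  linarith

/-- The median of the gamma law of shape `k + 1` is at least its mode `k`: by `reflect_mode` the mass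
of `[k, 2k]` is at least that of `[0, k]`. -/
lemma two_mul_incGamma_le (k : ℕ) : 2 * incGamma k k ≤ k.factorial := by
  have hd : ∀ x : ℝ, HasDerivAt (fun x => incGamma k (k + x) + incGamma k (k - x))
      ((k + x) ^ k * exp (-(k + x)) - (k - x) ^ k * exp (-(k - x))) x := by
    intro x
    have h1 := (hasDerivAt_incGamma k (k + x)).comp x ((hasDerivAt_id x).const_add (k : ℝ))
    have h2 := (hasDerivAt_incGamma k (k - x)).comp x ((hasDerivAt_id x).const_sub (k : ℝ))
    refine (h1.add h2).congr_deriv ?_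
    ring
  have hm : MonotoneOn (fun x => incGamma k (k + x) + incGamma k (k - x)) (Icc 0 (k : ℝ)) := by
    apply monotoneOn_of_deriv_nonneg (convex_Icc _ _)
      (fun x _ => (hd x).continuousAt.continuousWithinAt)
      (fun x _ => (hd x).differentiableAt.differentiableWithinAt)
    intro x hx
    rw [interior_Icc] at hx
    rw [(hd x).deriv]
    exact sub_nonneg.2 (reflect_mode hx.1.le hx.2)
  have hk : (0 : ℝ) ≤ k := by positivity
  have h := hm ⟨le_rfl, hk⟩ ⟨hk, le_rfl⟩ hk
  simp only [add_zero, sub_zero, sub_self, incGamma_zero] at h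
  have := incGamma_le_factorial k (add_nonneg hk hk)
  linarith

/-- In the variable `log u`, whose density is proportional to `u ^ (k + 1) * exp (-u)`, the gamma law
of shape `m = k + 1` is skewed to the left about `log m`; the inequality amounts to
`log r ≤ sinh (log r)` for `r = u / m ≥ 1`. -/
lemma reflect_log {k : ℕ} {m u : ℝ} (hm : m = k + 1) (hu : m ≤ u) :
    u ^ k * exp (-u) ≤ (m ^ 2 / u) ^ k * exp (-(m ^ 2 / u)) * (m ^ 2 / u ^ 2) := by
  have hm0 : 0 < m := by rw [hm]; positivity
  have hu0 : 0 < u := hm0.trans_le hu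
  have hl : 0 ≤ log (u / m) := log_nonneg ((one_le_div hm0).2 hu)
  have h := self_le_sinh_iff.2 hl
  rw [sinh_log (by positivity), log_div hu0.ne' hm0.ne'] at h
  have h' : 2 * m * (log u - log m) ≤ u - m ^ 2 / u := by
    have e : u - m ^ 2 / u = 2 * m * ((u / m - (u / m)⁻¹) / 2) := by field_simp
    rw [e]; gcongr
  have key : u ^ (k + 1) * exp (-u) ≤ (m ^ 2 / u) ^ (k + 1) * exp (-(m ^ 2 / u)) := by
    have e3 : log (m ^ 2 / u) = 2 * log m - log u := by
      rw [log_div (by positivity) hu0.ne', log_pow]; norm_num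
    have e1 : u ^ (k + 1) = exp (m * log u) := by
      rw [hm, ← rpow_natCast, rpow_def_of_pos hu0]; push_cast; ring_nf
    have e2 : (m ^ 2 / u) ^ (k + 1) = exp (m * (2 * log m - log u)) := by
      rw [← e3, ← rpow_natCast, rpow_def_of_pos (by positivity)]
      push_cast; rw [← hm]; ring_nf
    rw [e1, e2, ← exp_add, ← exp_add, exp_le_exp]
    linarith
  calc u ^ k * exp (-u) = u ^ (k + 1) * exp (-u) / u := by field_simp; ring
    _ ≤ (m ^ 2 / u) ^ (k + 1) * exp (-(m ^ 2 / u)) / u := by gcongr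
    _ = _ := by rw [pow_succ]; field_simp

/-- The median of the gamma law of shape `k + 1` is at most its mean `k + 1`: by `reflect_log` the
mass of `[m, u]` is at most that of `[m ^ 2 / u, m]`, and `u` tends to infinity. -/
lemma le_two_mul_incGamma (k : ℕ) : (k.factorial : ℝ) ≤ 2 * incGamma k (k + 1) := by
  obtain ⟨m, hm⟩ : ∃ m : ℝ, m = k + 1 := ⟨_, rfl⟩
  rw [← hm]
  have hm0 : 0 < m := by rw [hm]; positivity
  have hd : ∀ u : ℝ, m ≤ u → HasDerivAt (fun u => incGamma k u + incGamma k (m ^ 2 / u))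
      (u ^ k * exp (-u) - (m ^ 2 / u) ^ k * exp (-(m ^ 2 / u)) * (m ^ 2 / u ^ 2)) u := by
    intro u hu
    have hu0 : u ≠ 0 := (hm0.trans_le hu).ne'
    have h2 := (hasDerivAt_incGamma k (m ^ 2 / u)).comp u
      ((hasDerivAt_inv hu0).const_mul (m ^ 2))
    refine ((hasDerivAt_incGamma k u).add h2).congr_deriv ?_
    ring
  have ha : AntitoneOn (fun u => incGamma k u + incGamma k (m ^ 2 / u)) (Ici m) := by
    apply antitoneOn_of_deriv_nonpos (convex_Ici _)
      (fun x hx => (hd x hx).continuousAt.continuousWithinAt)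
      (fun x hx => (hd x (interior_subset hx)).differentiableAt.differentiableWithinAt)
    intro x hx
    rw [(hd x (interior_subset hx)).deriv]
    exact sub_nonpos.2 (reflect_log hm (interior_subset hx))
  apply le_of_tendsto (tendsto_incGamma k)
  filter_upwards [eventually_ge_atTop m] with u hu
  have h := ha (mem_Ici.2 le_rfl) hu hu
  have e : m ^ 2 / m = m := by field_simp
  simp only [e] at h
  have := incGamma_nonneg k (show 0 ≤ m ^ 2 / u from div_nonneg (sq_nonneg _) (hm0.le.trans hu))
  linarith

/-! ### Splitting the risk -/

/-- Up to a positive factor and a constant this says that splitting the expectation at `T = Ω` is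
optimal; the derivative in `T` is `(Ω ^ 2 - T ^ 2) * (T ^ n * exp (-T))`. -/
lemma split_optimal (n : ℕ) {Ω T : ℝ} (hΩ : 0 < Ω) (hT : 0 < T) :
    Ω ^ 2 * incGamma n T - incGamma (n + 2) T ≤ Ω ^ 2 * incGamma n Ω - incGamma (n + 2) Ω := by
  have hd : ∀ x, HasDerivAt (fun x => Ω ^ 2 * incGamma n x - incGamma (n + 2) x)
      ((Ω ^ 2 - x ^ 2) * (x ^ n * exp (-x))) x := by
    intro x
    refine (((hasDerivAt_incGamma n x).const_mul (Ω ^ 2)).sub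
      (hasDerivAt_incGamma (n + 2) x)).congr_deriv ?_
    ring
  rcases le_total T Ω with h | h
  · refine monotoneOn_of_deriv_nonneg (convex_Icc 0 Ω)
      (fun x _ => (hd x).continuousAt.continuousWithinAt)
      (fun x _ => (hd x).differentiableAt.differentiableWithinAt) ?_
      ⟨hT.le, h⟩ ⟨hΩ.le, le_rfl⟩ h
    intro x hx
    rw [interior_Icc] at hx
    rw [(hd x).deriv]
    have := hx.1
    have h2 : 0 ≤ Ω ^ 2 - x ^ 2 := by nlinarith [hx.1, hx.2]
    positivity
  · refine antitoneOn_of_deriv_nonpos (convex_Ici Ω)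
      (fun x _ => (hd x).continuousAt.continuousWithinAt)
      (fun x _ => (hd x).differentiableAt.differentiableWithinAt) ?_
      (mem_Ici.2 le_rfl) h h
    intro x hx
    rw [interior_Ici] at hx
    have hx : Ω < x := hx
    rw [(hd x).deriv]
    have : 0 < x := hΩ.trans hx
    have h2 : Ω ^ 2 - x ^ 2 ≤ 0 := by nlinarith
    exact mul_nonpos_of_nonpos_of_nonneg h2 (by positivity)

/-- With `X` gamma distributed of shape `ν = n + 2`, this is
`E[Ω / X; X < T] + E[X / Ω; X > T] - 1`. On the diagonal `T = Ω` it is the asymptotic risk of `Ω`. -/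
noncomputable def splitRisk (n : ℕ) (Ω T : ℝ) : ℝ :=
  Ω * (incGamma n T / n.factorial) / (n + 1) +
    (n + 2) * (1 - incGamma (n + 2) T / (n + 2).factorial) / Ω - 1

lemma splitRisk_le (n : ℕ) {Ω T : ℝ} (hΩ : 0 < Ω) (hT : 0 < T) :
    splitRisk n Ω T ≤ splitRisk n Ω Ω := by
  have key : ∀ S, splitRisk n Ω S = (Ω ^ 2 * incGamma n S - incGamma (n + 2) S) /
      (Ω * (n + 1).factorial) + (n + 2) / Ω - 1 := by
    intro S
    have : (n.factorial : ℝ) ≠ 0 := by positivity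
    rw [splitRisk, Nat.factorial_succ (n + 1), Nat.factorial_succ n]
    push_cast
    field_simp
    ring
  rw [key, key]
  have := split_optimal n hΩ hT
  gcongr

/-! ### The density at the mode -/

/-- The value at the mode `k` of the gamma density of shape `k + 1`. -/
noncomputable def modeDensity (k : ℕ) : ℝ := (k : ℝ) ^ k * exp (-k) / k.factorial

/-- A crude form of Stirling's lower bound for `k!`. -/
lemma modeDensity_le {k : ℕ} (hk : 0 < k) : modeDensity k ≤ 1 / √k := by
  have hk' : (0 : ℝ) < k := by exact_mod_cast hk
  have h := Stirling.le_factorial_stirling k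
  have e : ((k : ℝ) / exp 1) ^ k = (k : ℝ) ^ k * exp (-k) := by
    rw [div_pow, ← exp_nat_mul, mul_one, exp_neg, div_eq_mul_inv]
  rw [e] at h
  have h2 : √(k : ℝ) ≤ √(2 * π * k) := by
    apply sqrt_le_sqrt
    nlinarith [pi_gt_three]
  have h3 : 0 < √(k : ℝ) := sqrt_pos.2 hk'
  rw [modeDensity, div_le_div_iff₀ (by positivity) h3, one_mul, mul_comm]
  refine le_trans ?_ h
  gcongr

lemma tendsto_modeDensity : Tendsto modeDensity atTop (nhds 0) := by
  have h : Tendsto (fun k : ℕ => 1 / √(k : ℝ)) atTop (nhds 0) := by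
    simp only [one_div]
    exact tendsto_inv_atTop_zero.comp (tendsto_sqrt_atTop.comp tendsto_natCast_atTop_atTop)
  refine squeeze_zero' (Eventually.of_forall fun k => by unfold modeDensity; positivity) ?_ h
  filter_upwards [eventually_gt_atTop 0] with k hk using modeDensity_le hk

/-- The left side is at most `4ab / (a + b)`, a lower bound for `2 √(ab)`, which is the infimum over
`x` of the right side. -/
lemma harmonic_bound {a b x : ℝ} (ha : 0 ≤ a) (hb : 0 ≤ b) (hS : 1 ≤ a + b) (hx : 0 < x) :
    a + b - (a - b) ^ 2 ≤ a * x + b / x := by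
  have hS0 : 0 < a + b := by linarith
  have h1 : 4 * a * b / (a + b) ≤ a * x + b / x := by
    have e : a * x + b / x = (a * x ^ 2 + b) / x := by field_simp
    rw [e, div_le_div_iff₀ hS0 hx]
    nlinarith [sq_nonneg (a * x - b), mul_nonneg (mul_nonneg ha hb) (sq_nonneg (x - 1))]
  have h2 : a + b - (a - b) ^ 2 ≤ 4 * a * b / (a + b) := by
    rw [le_div_iff₀ hS0]
    nlinarith [mul_nonneg (sq_nonneg (a - b)) (sub_nonneg.2 hS)]
  exact h2.trans h1

/-! ### The risk at `√(ν (ν - 1))` -/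

/-- The value `√(ν (ν - 1))` for `ν = n + 2`. -/
noncomputable def centre (n : ℕ) : ℝ := √(((n : ℝ) + 2) * (n + 1))

/-- The gamma density of shape `n + 2` at the point `centre n`. -/
noncomputable def centreDensity (n : ℕ) : ℝ :=
  centre n ^ (n + 1) * exp (-centre n) / (n + 1).factorial

lemma centre_pos (n : ℕ) : 0 < centre n := sqrt_pos.2 (by positivity)

lemma centre_sq (n : ℕ) : centre n ^ 2 = ((n : ℝ) + 2) * (n + 1) := sq_sqrt (by positivity)

lemma le_centre (n : ℕ) : (n : ℝ) + 1 ≤ centre n :=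
  le_sqrt_of_sq_le (by nlinarith [n.cast_nonneg (α := ℝ)])

lemma centre_le (n : ℕ) : centre n ≤ (n : ℝ) + 2 := by
  rw [centre, sqrt_le_left (by positivity)]
  nlinarith [n.cast_nonneg (α := ℝ)]

lemma centreDensity_le (n : ℕ) : centreDensity n ≤ modeDensity (n + 1) := by
  have := integrand_le_mode n.succ_pos (centre_pos n).le
  unfold centreDensity modeDensity
  gcongr

lemma modeDensity_le_centreDensity (n : ℕ) :
    modeDensity (n + 1) ≤ exp 1 * centreDensity n := by
  have h1 := le_centre n
  have h2 := centre_le n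
  have h : ((n + 1 : ℕ) : ℝ) ^ (n + 1) * exp (-((n + 1 : ℕ) : ℝ)) ≤
      centre n ^ (n + 1) * exp (1 - centre n) := by
    have h0 := centre_pos n
    push_cast
    gcongr
    linarith
  calc modeDensity (n + 1) ≤ centre n ^ (n + 1) * exp (1 - centre n) / (n + 1).factorial := by
        unfold modeDensity; gcongr
    _ = _ := by rw [centreDensity, sub_eq_add_neg, exp_add]; ring

/-- The point `centre n` lies between `n + 1` and `n + 2`, as does the median of the gamma law of shape
`n + 2`, so its distribution function at `centre n` is within one mode density of `1 / 2`. -/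
lemma abs_median (n : ℕ) :
    |2 * (incGamma (n + 1) (centre n) / (n + 1).factorial) - 1| ≤ 2 * modeDensity (n + 1) := by
  have h1 := le_centre n
  have h2 := centre_le n
  have hn : (0 : ℝ) ≤ n := n.cast_nonneg
  have hf : (0 : ℝ) < (n + 1).factorial := by positivity
  have u1 := two_mul_incGamma_le (n + 1)
  have u2 := le_two_mul_incGamma (n + 1)
  have v1 := incGamma_sub_le (k := n + 1) n.succ_pos (a := n + 1) (b := centre n)
    (by positivity) h1 (by linarith)
  have v2 := incGamma_sub_le (k := n + 1) n.succ_pos (a := centre n) (b := n + 2)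
    (centre_pos n).le h2 (by linarith)
  have e : (n : ℝ) + 1 + 1 = n + 2 := by ring
  push_cast at u1 u2 v1 v2
  rw [e] at u2
  have e2 : 2 * (incGamma (n + 1) (centre n) / (n + 1).factorial) - 1 =
      (2 * incGamma (n + 1) (centre n) - (n + 1).factorial) / (n + 1).factorial := by
    field_simp
  rw [e2, modeDensity, abs_div, abs_of_pos hf, mul_div_assoc', div_le_div_iff_of_pos_right hf,
    abs_le]
  push_cast
  constructor <;> linarith

/-- The risk split at `centre n` in terms of `x = Ω / centre n`: it equals `c (a x + b / x) - 1`, with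
`c = ν / √(ν (ν - 1))` and with `a`, `b` reduced to shape `n + 2` by `incGamma_succ`. -/
lemma splitRisk_centre (n : ℕ) (Ω : ℝ) (hΩ : 0 < Ω) :
    splitRisk n Ω (centre n) = (n + 2) / centre n *
      ((incGamma (n + 1) (centre n) / (n + 1).factorial + centreDensity n) * (Ω / centre n) +
       (1 - incGamma (n + 1) (centre n) / (n + 1).factorial
          + centreDensity n / ((n + 2) / centre n)) / (Ω / centre n)) - 1 := by
  have h1 := incGamma_succ n (centre n)
  have h2 := incGamma_succ (n + 1) (centre n)
  have hc := centre_pos n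
  have hsq := centre_sq n
  have hf : (n.factorial : ℝ) ≠ 0 := by positivity
  have g1 : incGamma (n + 1) (centre n) / (n + 1).factorial + centreDensity n =
      incGamma n (centre n) / n.factorial := by
    rw [centreDensity, h1, Nat.factorial_succ]
    push_cast
    field_simp
    ring
  have g2 : 1 - incGamma (n + 1) (centre n) / (n + 1).factorial
          + centreDensity n / ((n + 2) / centre n) =
      1 - incGamma (n + 2) (centre n) / (n + 2).factorial := by
    rw [centreDensity, h2, Nat.factorial_succ (n + 1)]
    push_cast
    field_simp
    ring
  rw [g1, g2, splitRisk]
  have e1 : ((n : ℝ) + 2) / centre n * (Ω / centre n) = Ω / (n + 1) := by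
    rw [div_mul_div_comm, ← sq, hsq]; field_simp
  have e2 : ((n : ℝ) + 2) / centre n / (Ω / centre n) = (n + 2) / Ω := by
    field_simp
  generalize incGamma n (centre n) / n.factorial = a
  generalize 1 - incGamma (n + 2) (centre n) / (n + 2).factorial = b
  have e3 : ((n : ℝ) + 2) / centre n * (a * (Ω / centre n) + b / (Ω / centre n)) =
      a * (((n : ℝ) + 2) / centre n * (Ω / centre n)) +
        b * (((n : ℝ) + 2) / centre n / (Ω / centre n)) := by ring
  rw [e3, e1, e2]
  ring

/-- The supremum risk `R̄` for `ν = n + 2`. -/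
noncomputable def barRisk (n : ℕ) : ℝ :=
  ((n + 2) / centre n - 1) + ((n + 2) / centre n + 1) * centreDensity n

lemma splitRisk_centre_self (n : ℕ) : splitRisk n (centre n) (centre n) = barRisk n := by
  rw [splitRisk_centre n _ (centre_pos n), barRisk]
  have := centre_pos n
  rw [div_self this.ne']
  field_simp
  ring

/-- No `Ω` beats `centre n` by more than the order of `1 / n`. -/
lemma barRisk_sub_le (n : ℕ) {Ω : ℝ} (hΩ : 0 < Ω) :
    barRisk n - 18 * modeDensity (n + 1) ^ 2 ≤ splitRisk n Ω Ω := by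
  refine le_trans ?_ (splitRisk_le n hΩ (centre_pos n))
  rw [splitRisk_centre n Ω hΩ, ← splitRisk_centre_self, splitRisk_centre n _ (centre_pos n)]
  have hc0 := centre_pos n
  have hmed := abs_median n
  have hw := centreDensity_le n
  have hw0 : 0 ≤ centreDensity n := by unfold centreDensity; positivity
  have hg0 : 0 ≤ incGamma (n + 1) (centre n) / (n + 1).factorial :=
    div_nonneg (incGamma_nonneg _ hc0.le) (by positivity)
  have hg1 : incGamma (n + 1) (centre n) / (n + 1).factorial ≤ 1 :=
    div_le_one_of_le₀ (incGamma_le_factorial _ hc0.le) (by positivity)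
  have hc1 : 1 ≤ ((n : ℝ) + 2) / centre n := (one_le_div hc0).2 (centre_le n)
  have hc2 : ((n : ℝ) + 2) / centre n ≤ 2 := by
    rw [div_le_iff₀ hc0]; linarith [le_centre n, n.cast_nonneg (α := ℝ)]
  rw [div_self hc0.ne', mul_one, div_one]
  generalize incGamma (n + 1) (centre n) / (n + 1).factorial = g at *
  generalize ((n : ℝ) + 2) / centre n = c at *
  generalize centreDensity n = w at *
  generalize modeDensity (n + 1) = d at *
  have hx : 0 < Ω / centre n := by positivity
  have hwc0 : 0 ≤ w / c := by positivity
  have hwc : w / c ≤ w := div_le_self hw0 hc1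
  have hb := harmonic_bound (a := g + w) (b := 1 - g + w / c) (by linarith) (by linarith)
    (by linarith) hx
  have hD : (g + w - (1 - g + w / c)) ^ 2 ≤ (3 * d) ^ 2 := by
    rw [abs_le] at hmed
    apply sq_le_sq'
    · linarith [hmed.1]
    · linarith [hmed.2]
  have hc : 0 ≤ c := by linarith
  have := mul_le_mul_of_nonneg_left hb hc
  nlinarith [mul_le_mul_of_nonneg_left hD hc, mul_nonneg (sub_nonneg.2 hc2) (sq_nonneg d)]

/-- A solution `Ω` of the stationarity equation does at least as well as `centre n`: split at `Ω`, the
risk of any `T` is a multiple of `T + Ω ^ 2 / T`, minus one, which is least at `T = Ω`. -/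
lemma splitRisk_le_barRisk (n : ℕ) {Ω : ℝ} (hΩ : 0 < Ω)
    (hst : Ω ^ 2 / (((n : ℝ) + 2) * (n + 1)) =
      (1 - incGamma (n + 2) Ω / (n + 2).factorial) / (incGamma n Ω / n.factorial)) :
    splitRisk n Ω Ω ≤ barRisk n := by
  rw [← splitRisk_centre_self]
  refine le_trans ?_ (splitRisk_le n (centre_pos n) hΩ)
  have hg : 0 < incGamma n Ω / n.factorial := div_pos (incGamma_pos n hΩ) (by positivity)
  unfold splitRisk
  generalize incGamma n Ω / n.factorial = a at *
  generalize 1 - incGamma (n + 2) Ω / (n + 2).factorial = b at *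
  have hb : b = Ω ^ 2 / (((n : ℝ) + 2) * (n + 1)) * a := by
    rw [hst]; field_simp
  have hc0 := centre_pos n
  have e1 : ∀ T : ℝ, 0 < T → T * a / (n + 1) + (n + 2) * b / T - 1 =
      a / (n + 1) * (T + Ω ^ 2 / T) - 1 := by
    intro T hT
    rw [hb]
    field_simp
  rw [e1 _ hΩ, e1 _ hc0]
  have : Ω + Ω ^ 2 / Ω ≤ centre n + Ω ^ 2 / centre n := by
    have e : Ω + Ω ^ 2 / Ω = 2 * Ω := by field_simp; ring
    rw [e, ← sub_nonneg]
    have : centre n + Ω ^ 2 / centre n - 2 * Ω = (centre n - Ω) ^ 2 / centre n := by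
      field_simp; ring
    rw [this]; positivity
  gcongr

lemma two_mul_centreDensity_le (n : ℕ) : 2 * centreDensity n ≤ barRisk n := by
  have hc1 : 1 ≤ ((n : ℝ) + 2) / centre n := (one_le_div (centre_pos n)).2 (centre_le n)
  have hw0 : 0 ≤ centreDensity n := by have := centre_pos n; unfold centreDensity; positivity
  unfold barRisk
  nlinarith

/-! ### The limit of the ratio -/

lemma tendsto_ratio (Ω : ℕ → ℝ) (hΩ : ∀ n, 0 < Ω n)
    (hst : ∀ n : ℕ, Ω n ^ 2 / (((n : ℝ) + 2) * (n + 1)) =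
      (1 - incGamma (n + 2) (Ω n) / (n + 2).factorial) / (incGamma n (Ω n) / n.factorial)) :
    Tendsto (fun n => barRisk n / splitRisk n (Ω n) (Ω n)) atTop (nhds 1) := by
  have hpos : ∀ n, 0 < barRisk n := fun n => by
    have hw : 0 < centreDensity n := by have := centre_pos n; unfold centreDensity; positivity
    linarith [two_mul_centreDensity_le n]
  have hlow : ∀ n, 1 - 9 * exp 1 * modeDensity (n + 1) ≤
      splitRisk n (Ω n) (Ω n) / barRisk n := by
    intro n
    rw [le_div_iff₀ (hpos n)]
    have hd0 : 0 ≤ modeDensity (n + 1) := by unfold modeDensity; positivity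
    have h1 : 2 * modeDensity (n + 1) ≤ exp 1 * barRisk n := by
      have := mul_le_mul_of_nonneg_left (two_mul_centreDensity_le n) (exp_pos 1).le
      linarith [modeDensity_le_centreDensity n]
    nlinarith [barRisk_sub_le n (hΩ n), mul_le_mul_of_nonneg_left h1 hd0]
  have hup : ∀ n, splitRisk n (Ω n) (Ω n) / barRisk n ≤ 1 := fun n =>
    div_le_one_of_le₀ (splitRisk_le_barRisk n (hΩ n) (hst n)) (hpos n).le
  have hl : Tendsto (fun n => 1 - 9 * exp 1 * modeDensity (n + 1)) atTop (nhds 1) := by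
    simpa using ((tendsto_modeDensity.comp (tendsto_add_atTop_nat 1)).const_mul
      (9 * exp 1)).const_sub 1
  have h := (tendsto_of_tendsto_of_tendsto_of_le_of_le hl tendsto_const_nhds hlow hup).inv₀
    one_ne_zero
  simpa using h

theorem stmt13 (Ωs : ℕ → ℝ)
    (hΩs : ∀ ν : ℕ, 2 ≤ ν → 0 < Ωs ν ∧
      (Ωs ν) ^ 2 / ((ν : ℝ) * ((ν : ℝ) - 1)) =
        (1 - lowerGamma ((ν : ℝ) + 1) (Ωs ν)) / lowerGamma ((ν : ℝ) - 1) (Ωs ν)) :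
    Filter.Tendsto
      (fun ν : ℕ =>
        (((ν : ℝ) / Real.sqrt ((ν : ℝ) * ((ν : ℝ) - 1)) - 1) +
            ((ν : ℝ) / Real.sqrt ((ν : ℝ) * ((ν : ℝ) - 1)) + 1) *
              (Real.sqrt ((ν : ℝ) * ((ν : ℝ) - 1))) ^ (ν - 1) *
              Real.exp (-Real.sqrt ((ν : ℝ) * ((ν : ℝ) - 1))) / (Nat.factorial (ν - 1))) /
          (Ωs ν * lowerGamma ((ν : ℝ) - 1) (Ωs ν) / ((ν : ℝ) - 1) -
            (ν : ℝ) * lowerGamma ((ν : ℝ) + 1) (Ωs ν) / Ωs ν + (ν : ℝ) / Ωs ν - 1))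
      Filter.atTop (nhds 1) := by
  rw [← tendsto_add_atTop_iff_nat 2]
  have c1 : ∀ n : ℕ, ((n + 2 : ℕ) : ℝ) - 1 = n + 1 := fun n => by push_cast; ring
  have c2 : ∀ n : ℕ, ((n + 2 : ℕ) : ℝ) = n + 2 := fun n => by push_cast; ring
  have l1 : ∀ (n : ℕ) (u : ℝ), lowerGamma (((n + 2 : ℕ) : ℝ) - 1) u =
      incGamma n u / n.factorial := fun n u => by rw [c1, lowerGamma_natCast_add_one]
  have l2 : ∀ (n : ℕ) (u : ℝ), lowerGamma (((n + 2 : ℕ) : ℝ) + 1) u =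
      incGamma (n + 2) u / (n + 2).factorial := fun n u => lowerGamma_natCast_add_one (n + 2) u
  have h := tendsto_ratio (fun n => Ωs (n + 2)) (fun n => (hΩs (n + 2) (by omega)).1) (fun n => by
    have := (hΩs (n + 2) (by omega)).2
    rwa [l1, l2, c1, c2] at this)
  refine h.congr fun n => ?_
  rw [l1, l2, c1, c2]
  congr 1
  · rw [barRisk, centreDensity, centre, show n + 2 - 1 = n + 1 from rfl]
    ring
  · rw [splitRisk]
    ring
end

section
/- For any sequence of real numbers (δ_k) with 0 ≤ δ_k ≤ 1 for all k, one has lim_{k→∞} γ(k, k+δ_k) = 1/2. -/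
/-!
Laplace's method on the left half-line, combined with Stirling's formula.

Write `k = n + 1`, so that `Γ(k) = n!`. The integrand `s ^ n * exp (-s)` peaks at `s = n`, where it
equals `(n / e) ^ n`. Substituting `s = n - √n * t` gives
`∫₀ⁿ s ^ n e ^ (-s) ds = (n / e) ^ n * √n * ∫₀^√n (1 - t / √n) ^ n e ^ (√n t) dt`.
On this side of the peak the rescaled integrand is dominated by `exp (-t² / 2)`, because
`log (1 - z) ≤ -z - z² / 2` for `0 ≤ z < 1`, and it converges to `exp (-t² / 2)` pointwise; dominated
convergence yields the limit `√(2π) / 2` (`tendsto_scaledIntegral`). As `n! ∼ √(2πn) (n / e) ^ n`, the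
part of the integral over `[0, n]` contributes `1 / 2`.

The rest, over `[n, n + 1 + δ]`, is at most twice the peak value (`integral_right_le`), which is
negligible against `n!`; this is why the sequence `δ` plays no role.
-/

open Real Filter

/-- The integrand of the Gamma integral after the substitution `s = n - √n * t`, normalized by its
peak value and cut off at `t = √n`, which corresponds to `s = 0`. -/
noncomputable def scaledIntegrand (n : ℕ) (t : ℝ) : ℝ :=
  Set.indicator (Set.Iio (√(n : ℝ))) (fun t => (1 - t / √(n : ℝ)) ^ n * exp (√(n : ℝ) * t)) t

/-- The first two terms of the series of `-log (1 - z)`, all of whose terms are nonnegative. -/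
lemma log_one_sub_le {z : ℝ} (h0 : 0 ≤ z) (h1 : z < 1) : log (1 - z) ≤ -z - z ^ 2 / 2 := by
  have h := hasSum_pow_div_log_of_abs_lt_one (x := z) (by rwa [abs_of_nonneg h0])
  have := sum_le_hasSum (Finset.range 2) (fun i _ => by positivity) h
  norm_num [Finset.sum_range_succ] at this
  linarith

lemma scaled_eq_exp {n : ℕ} (hn : 0 < n) {t : ℝ} (ht : t < √(n : ℝ)) :
    (1 - t / √(n : ℝ)) ^ n * exp (√(n : ℝ) * t)
      = exp (n * (log (1 - t / √(n : ℝ)) + t / √(n : ℝ))) := by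
  have hs : 0 < √(n : ℝ) := by positivity
  have hz : 0 < 1 - t / √(n : ℝ) := by
    rw [sub_pos, div_lt_one hs]; exact ht
  have hsq : √(n : ℝ) * √(n : ℝ) = n := mul_self_sqrt (by positivity)
  have h2 : (n : ℝ) * (t / √(n : ℝ)) = √(n : ℝ) * t := by
    nth_rewrite 1 [← hsq]
    field_simp
  rw [mul_add, h2, exp_add, exp_nat_mul, exp_log hz]

lemma scaledIntegrand_nonneg (n : ℕ) (t : ℝ) : 0 ≤ scaledIntegrand n t := by
  unfold scaledIntegrand
  refine Set.indicator_nonneg (fun t ht => ?_) t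
  have ht : t < √(n : ℝ) := ht
  have : t / √(n : ℝ) ≤ 1 := div_le_one_of_le₀ ht.le (by positivity)
  have : 0 ≤ 1 - t / √(n : ℝ) := by linarith
  positivity

lemma scaledIntegrand_le {n : ℕ} {t : ℝ} (ht : 0 < t) :
    scaledIntegrand n t ≤ exp (-(1 / 2) * t ^ 2) := by
  unfold scaledIntegrand
  by_cases h : t < √(n : ℝ)
  · have hs : 0 < √(n : ℝ) := ht.trans h
    have hn : 0 < n := by
      have := Real.sqrt_pos.1 hs
      exact_mod_cast this
    rw [Set.indicator_of_mem (by exact h), scaled_eq_exp hn h, exp_le_exp]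
    have hl := log_one_sub_le (z := t / √(n : ℝ)) (by positivity) ((div_lt_one hs).2 h)
    have hsq : √(n : ℝ) ^ 2 = n := sq_sqrt (by positivity)
    calc (n : ℝ) * (log (1 - t / √(n : ℝ)) + t / √(n : ℝ))
        ≤ n * (-((t / √(n : ℝ)) ^ 2 / 2)) := by gcongr; linarith
      _ = _ := by
        rw [div_pow, hsq]
        have : (n : ℝ) ≠ 0 := by positivity
        field_simp
  · rw [Set.indicator_of_notMem (by simpa using h)]
    positivity

lemma tendsto_sqrt_nat : Tendsto (fun n : ℕ => √(n : ℝ)) atTop atTop :=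
  Real.tendsto_sqrt_atTop.comp tendsto_natCast_atTop_atTop

/-- The logarithm of the integrand differs from `-t² / 2` by at most `n z³ / (1 - z)` with
`z = t / √n`, that is, by `t² z / (1 - z) → 0`. -/
lemma tendsto_scaledIntegrand {t : ℝ} (ht : 0 < t) :
    Tendsto (fun n => scaledIntegrand n t) atTop (nhds (exp (-(1 / 2) * t ^ 2))) := by
  have hz : Tendsto (fun n : ℕ => t / √(n : ℝ)) atTop (nhds 0) :=
    tendsto_sqrt_nat.const_div_atTop t
  have hev : ∀ᶠ n : ℕ in atTop, t < √(n : ℝ) := tendsto_sqrt_nat.eventually_gt_atTop t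
  have hlog : Tendsto (fun n : ℕ => (n : ℝ) * (log (1 - t / √(n : ℝ)) + t / √(n : ℝ))) atTop
      (nhds (-(1 / 2) * t ^ 2)) := by
    rw [tendsto_iff_norm_sub_tendsto_zero]
    have hb : Tendsto (fun n : ℕ => t ^ 2 * ((t / √(n : ℝ)) / (1 - t / √(n : ℝ)))) atTop
        (nhds 0) := by
      have := (hz.div (hz.const_sub 1) (by norm_num)).const_mul (t ^ 2)
      simpa using this
    refine squeeze_zero' (Eventually.of_forall fun _ => norm_nonneg _) ?_ hb
    filter_upwards [hev] with n h
    have hs : 0 < √(n : ℝ) := ht.trans h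
    have hn : (0 : ℝ) < n := Real.sqrt_pos.1 hs
    set z := t / √(n : ℝ) with hzdef
    have hz0 : 0 < z := by positivity
    have hz1 : z < 1 := (div_lt_one hs).2 h
    have hnz : (n : ℝ) * z ^ 2 = t ^ 2 := by
      rw [hzdef, div_pow, sq_sqrt hn.le]; field_simp
    have key := abs_log_sub_add_sum_range_le (x := z) (by rwa [abs_of_pos hz0]) 2
    norm_num [Finset.sum_range_succ, abs_of_pos hz0] at key
    have e : (n : ℝ) * (log (1 - z) + z) - -(1 / 2) * t ^ 2
        = n * (z + z ^ 2 / 2 + log (1 - z)) := by rw [← hnz]; ring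
    rw [e, Real.norm_eq_abs, abs_mul, abs_of_pos hn]
    calc (n : ℝ) * |z + z ^ 2 / 2 + log (1 - z)| ≤ n * (z ^ 3 / (1 - z)) := by gcongr
      _ = _ := by rw [← hnz]; ring
  refine ((continuous_exp.tendsto _).comp hlog).congr' ?_
  filter_upwards [hev] with n h
  have hn : 0 < n := by
    have := Real.sqrt_pos.1 (ht.trans h)
    exact_mod_cast this
  unfold scaledIntegrand
  rw [Set.indicator_of_mem (by exact h), scaled_eq_exp hn h]
  rfl

lemma measurable_scaledIntegrand (n : ℕ) : Measurable (scaledIntegrand n) := by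
  unfold scaledIntegrand
  refine Measurable.indicator ?_ measurableSet_Iio
  fun_prop

lemma tendsto_scaledIntegral :
    Tendsto (fun n => ∫ t in Set.Ioi (0 : ℝ), scaledIntegrand n t) atTop
      (nhds (√(2 * π) / 2)) := by
  have h : ∫ t in Set.Ioi (0 : ℝ), exp (-(1 / 2) * t ^ 2) = √(2 * π) / 2 := by
    rw [integral_gaussian_Ioi]; congr 2; ring
  rw [← h]
  refine MeasureTheory.tendsto_integral_of_dominated_convergence
    (fun t => exp (-(1 / 2) * t ^ 2)) (fun n => (measurable_scaledIntegrand n).aestronglyMeasurable)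
    (integrable_exp_neg_mul_sq (by norm_num)).integrableOn (fun n => ?_) ?_
  · filter_upwards [MeasureTheory.ae_restrict_mem measurableSet_Ioi] with t ht
    rw [Real.norm_eq_abs, abs_of_nonneg (scaledIntegrand_nonneg n t)]
    exact scaledIntegrand_le ht
  · filter_upwards [MeasureTheory.ae_restrict_mem measurableSet_Ioi] with t ht
    exact tendsto_scaledIntegrand ht

lemma integral_left_eq {n : ℕ} (hn : 0 < n) :
    ∫ s in (0 : ℝ)..n, s ^ n * exp (-s)
      = (n / exp 1) ^ n * √(n : ℝ) * ∫ t in Set.Ioi (0 : ℝ), scaledIntegrand n t := by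
  have hs : 0 < √(n : ℝ) := by positivity
  have hsq : √(n : ℝ) * √(n : ℝ) = n := mul_self_sqrt (by positivity)
  have e1 : ∫ t in Set.Ioi (0 : ℝ), scaledIntegrand n t
      = ∫ t in (0 : ℝ)..√(n : ℝ), (1 - t / √(n : ℝ)) ^ n * exp (√(n : ℝ) * t) := by
    unfold scaledIntegrand
    rw [MeasureTheory.setIntegral_indicator measurableSet_Iio, Set.Ioi_inter_Iio,
      intervalIntegral.integral_of_le hs.le, MeasureTheory.integral_Ioc_eq_integral_Ioo]
  have e2 := intervalIntegral.integral_comp_sub_mul (a := 0) (b := √(n : ℝ))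
    (fun s : ℝ => s ^ n * exp (-s)) hs.ne' (n : ℝ)
  rw [hsq, sub_self, mul_zero, sub_zero, smul_eq_mul] at e2
  have e3 : ∀ t : ℝ, ((n : ℝ) - √(n : ℝ) * t) ^ n * exp (-((n : ℝ) - √(n : ℝ) * t))
      = (n / exp 1) ^ n * ((1 - t / √(n : ℝ)) ^ n * exp (√(n : ℝ) * t)) := by
    intro t
    have a : (n : ℝ) - √(n : ℝ) * t = n * (1 - t / √(n : ℝ)) := by
      nth_rewrite 3 [← hsq]
      nth_rewrite 1 [← hsq]
      field_simp
    have b : exp (-((n : ℝ) - √(n : ℝ) * t)) = (exp 1 ^ n)⁻¹ * exp (√(n : ℝ) * t) := by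
      rw [← exp_nat_mul, mul_one, ← exp_neg, ← exp_add]; congr 1; ring
    rw [b, a, mul_pow, div_pow]; ring
  simp only [e3, intervalIntegral.integral_const_mul] at e2
  rw [e1, mul_right_comm, e2]
  field_simp

/-- The integrand is at most its peak value: `s / n ≤ exp (s / n - 1)`, raised to the power `n`. -/
lemma integrand_le {n : ℕ} (hn : 0 < n) {s : ℝ} (hs : 0 ≤ s) :
    s ^ n * exp (-s) ≤ (n / exp 1) ^ n := by
  have hn' : (0 : ℝ) < n := by exact_mod_cast hn
  have h1 : s ≤ n * exp (s / n - 1) := by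
    have := add_one_le_exp (s / n - 1)
    calc s = n * (s / n - 1 + 1) := by field_simp; ring
      _ ≤ _ := by gcongr
  calc s ^ n * exp (-s) ≤ (n * exp (s / n - 1)) ^ n * exp (-s) := by gcongr
    _ = _ := by
      rw [mul_pow, div_pow, ← exp_nat_mul, ← exp_nat_mul, mul_assoc, ← exp_add,
        div_eq_mul_inv ((n : ℝ) ^ n), ← exp_neg]
      congr 2; field_simp; ring

lemma integral_right_le {n : ℕ} (hn : 0 < n) {d : ℝ} (h0 : 0 ≤ d) (h1 : d ≤ 1) :
    |∫ s in (n : ℝ)..(n + 1 + d), s ^ n * exp (-s)| ≤ 2 * (n / exp 1) ^ n := by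
  have h := intervalIntegral.norm_integral_le_of_norm_le_const (a := (n : ℝ)) (b := n + 1 + d)
    (f := fun s : ℝ => s ^ n * exp (-s)) (C := (n / exp 1) ^ n) (fun s hs => by
      rw [Set.uIoc_of_le (by linarith)] at hs
      have hs0 : 0 ≤ s := (Nat.cast_nonneg n).trans hs.1.le
      rw [Real.norm_eq_abs, abs_of_nonneg (by positivity)]
      exact integrand_le hn hs0)
  rw [Real.norm_eq_abs] at h
  refine h.trans ?_
  rw [mul_comm, abs_of_nonneg (by linarith)]
  gcongr
  linarith

lemma lowerGamma_succ (n : ℕ) (u : ℝ) :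
    lowerGamma ((n + 1 : ℕ) : ℝ) u
      = ((∫ s in (0 : ℝ)..n, s ^ n * exp (-s)) + ∫ s in (n : ℝ)..u, s ^ n * exp (-s))
        / (n.factorial : ℝ) := by
  unfold lowerGamma
  have hc : Continuous fun s : ℝ => s ^ n * exp (-s) := by fun_prop
  rw [intervalIntegral.integral_add_adjacent_intervals (hc.intervalIntegrable _ _)
    (hc.intervalIntegrable _ _)]
  push_cast
  rw [Real.Gamma_nat_eq_factorial]
  simp only [add_sub_cancel_right, rpow_natCast]

theorem stmt17 (δ : ℕ → ℝ) (hδ : ∀ k : ℕ, 0 ≤ δ k ∧ δ k ≤ 1) :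
    Filter.Tendsto (fun k : ℕ => lowerGamma (k : ℝ) ((k : ℝ) + δ k))
      Filter.atTop (nhds (1 / 2)) := by
  rw [← tendsto_add_atTop_iff_nat 1]
  have hst := Stirling.tendsto_stirlingSeq_sqrt_pi
  have hpi : √π ≠ 0 := by positivity
  have hfac : ∀ n : ℕ, 0 < n →
      (n.factorial : ℝ) = Stirling.stirlingSeq n * (√2 * √(n : ℝ) * (n / exp 1) ^ n) := by
    intro n hn
    have : (0 : ℝ) < n := by exact_mod_cast hn
    rw [Stirling.stirlingSeq, ← sqrt_mul (by norm_num)]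
    field_simp
  have hpos : ∀ᶠ n : ℕ in atTop, 0 < Stirling.stirlingSeq n :=
    hst.eventually_const_lt (by positivity)
  have hleft : Tendsto (fun n : ℕ => (∫ s in (0 : ℝ)..n, s ^ n * exp (-s)) / (n.factorial : ℝ))
      atTop (nhds (1 / 2)) := by
    have h := tendsto_scaledIntegral.div (hst.mul_const √2) (by positivity)
    have e : √(2 * π) / 2 / (√π * √2) = 1 / 2 := by
      rw [sqrt_mul (by norm_num)]; field_simp
    rw [e] at h
    refine h.congr' ?_
    filter_upwards [eventually_gt_atTop 0, hpos] with n hn hp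
    have : (0 : ℝ) < n := by exact_mod_cast hn
    simp only [Pi.div_apply]
    rw [integral_left_eq hn, hfac n hn]
    field_simp
  have hright : Tendsto (fun n : ℕ =>
      (∫ s in (n : ℝ)..(n + 1 + δ (n + 1)), s ^ n * exp (-s)) / (n.factorial : ℝ))
      atTop (nhds 0) := by
    have h : Tendsto (fun n : ℕ => 2 / (Stirling.stirlingSeq n * √2 * √(n : ℝ))) atTop (nhds 0) :=
      ((hst.mul_const √2).pos_mul_atTop (by positivity) tendsto_sqrt_nat).const_div_atTop 2
    refine squeeze_zero_norm' ?_ h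
    filter_upwards [eventually_gt_atTop 0, hpos] with n hn hp
    have : (0 : ℝ) < n := by exact_mod_cast hn
    rw [Real.norm_eq_abs, abs_div, abs_of_nonneg (a := (n.factorial : ℝ)) (by positivity)]
    calc _ ≤ 2 * (n / exp 1) ^ n / (n.factorial : ℝ) := by
          gcongr
          exact integral_right_le hn (hδ _).1 (hδ _).2
      _ = _ := by
          rw [hfac n hn]
          field_simp
  have := hleft.add hright
  rw [add_zero] at this
  refine this.congr fun n => ?_
  rw [lowerGamma_succ, add_div]
  push_cast
  rfl
end
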